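/- Fix a natural number k ≥ 1. Let X_f : ℂ → ℂ be any map and define Y : ℂ^{k+1} → ℂ^{k+1} by (Y(z)) j = conj(Π_{m ≠ j} z m) · X_f(ψ(z)). Then for every z ∈ ℂ^{k+1} and every v ∈ ℂ^{k+1} lying in the kernel of the real Fréchet derivative of ψ at z, one has ω(Y(z), v) = 0. That is, the lifted Hamiltonian vector field Y(z) is symplectically orthogonal to the tangent space of the fiber of ψ through z — it is a horizontal vector field for the symplectic connection determined by ψ. -/

import Mathlib

noncomputable section

/-- The standard symplectic form on `ℂ^n`: `ω(v, w) = Σ_m Im(conj (v m) * w m)`. -/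
def omegaStd {n : ℕ} (v w : Fin n → ℂ) : ℝ :=
  ∑ m, ((starRingEnd ℂ) (v m) * w m).im

/-- The fibration `ψ(z) = z_1 ⋯ z_{k+1}`. -/
def psiFib {k : ℕ} (z : Fin (k + 1) → ℂ) : ℂ := ∏ m, z m

/-- The lift of a vector field `X_f` on the base `ℂ`:
`(Y z) j = conj(Π_{m ≠ j} z m) · X_f(ψ z)`. -/
def liftedField {k : ℕ} (Xf : ℂ → ℂ) (z : Fin (k + 1) → ℂ) : Fin (k + 1) → ℂ :=
  fun j => (starRingEnd ℂ) (∏ m ∈ Finset.univ.erase j, z m) * Xf (psiFib z)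

theorem fderiv_psiFib_apply {k : ℕ} (z v : Fin (k + 1) → ℂ) :
    fderiv ℝ psiFib z v = ∑ j, (∏ m ∈ Finset.univ.erase j, z m) * v j := by
  have h : HasFDerivAt (𝕜 := ℝ) (psiFib (k := k)) _ z :=
    hasFDerivAt_finsetProd (𝕜 := ℝ) (u := Finset.univ) (x := z)
  simp [h.fderiv]

theorem omegaStd_liftedField {k : ℕ} (Xf : ℂ → ℂ) (z v : Fin (k + 1) → ℂ) :
    omegaStd (liftedField Xf z) v =
      ((starRingEnd ℂ) (Xf (psiFib z)) * fderiv ℝ psiFib z v).im := by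
  rw [fderiv_psiFib_apply, Finset.mul_sum, Complex.im_sum]
  refine Finset.sum_congr rfl fun j _ => ?_
  rw [liftedField, map_mul, Complex.conj_conj]
  ring_nf

/-- the lifted field `Y(z)` is symplectically orthogonal to the kernel of
`dψ_z`, i.e. to the tangent space of the fiber of `ψ` through `z`: it is horizontal for
the symplectic connection determined by `ψ`. -/
theorem stmt_15 (k : ℕ) (hk : 1 ≤ k) (Xf : ℂ → ℂ) (z v : Fin (k + 1) → ℂ)
    (hv : fderiv ℝ psiFib z v = 0) :
    omegaStd (liftedField Xf z) v = 0 := by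
  rw [omegaStd_liftedField, hv, mul_zero, Complex.zero_im]
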